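/- Let A be a skew left brace such that A = B + C is a factorization through left ideals B and C which are trivial as skew left braces. Then A^(2) = B*C + C*B = C*B + B*C, where A^(2) = A*A. -/

import Mathlib

/-- A skew left brace: `(A,+)` and `(A,∘)` are groups (sharing the same identity `0`)
such that `a ∘ (b + c) = a ∘ b - a + a ∘ c`.  Here `circ` is the operation `∘` and
`cinv a` is the inverse of `a` in `(A,∘)`. -/
class SkewBrace (A : Type*) extends AddGroup A where
  circ : A → A → A
  cinv : A → A
  circ_assoc : ∀ a b c : A, circ (circ a b) c = circ a (circ b c)
  zero_circ : ∀ a : A, circ 0 a = a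
  circ_zero : ∀ a : A, circ a 0 = a
  cinv_circ : ∀ a : A, circ (cinv a) a = 0
  circ_cinv : ∀ a : A, circ a (cinv a) = 0
  compat : ∀ a b c : A, circ a (b + c) = circ a b + -a + circ a c

open SkewBrace

/-- `lam a b = -a + a ∘ b`. -/
def lam {A : Type*} [SkewBrace A] (a b : A) : A := -a + circ a b

/-- The star operation `a * b = lam a b - b = -a + a ∘ b - b`. -/
def bstar {A : Type*} [SkewBrace A] (a b : A) : A := lam a b - b

/-- `X * Y`: the subgroup of `(A,+)` generated by `{x * y : x ∈ X, y ∈ Y}`. -/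
def starSpan {A : Type*} [SkewBrace A] (X Y : Set A) : AddSubgroup A :=
  AddSubgroup.closure {z | ∃ x ∈ X, ∃ y ∈ Y, z = bstar x y}

/-- The right series of `st`: `rseriesOf st 0 = A = A^(1)` and
`rseriesOf st n = A^(n+1)`, so that `A^(n+1) = A^(n) * A`. -/
def rseriesOf {G : Type*} [AddGroup G] (st : G → G → G) : ℕ → AddSubgroup G
  | 0 => ⊤
  | n + 1 => AddSubgroup.closure {z | ∃ u ∈ rseriesOf st n, ∃ a : G, z = st u a}

theorem lam_add' {A : Type*} [SkewBrace A] (a x y : A) : lam a (x + y) = lam a x + lam a y := by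
  simp only [lam, compat, add_assoc]

theorem circ_eq' {A : Type*} [SkewBrace A] (a x : A) : circ a x = a + lam a x := by
  simp [lam]

theorem lam_circ' {A : Type*} [SkewBrace A] (a b x : A) :
    lam (circ a b) x = lam a (lam b x) := by
  have h : circ (circ a b) x = circ a b + lam a (lam b x) := by
    rw [circ_assoc, circ_eq' b x, circ_eq' a (b + lam b x), lam_add', ← add_assoc, ← circ_eq']
  rw [lam, h, neg_add_cancel_left]

theorem bstar_add' {A : Type*} [SkewBrace A] (a x y : A) :
    bstar a (x + y) = bstar a x + (x + bstar a y + -x) := by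
  simp only [bstar, lam_add', sub_eq_add_neg, neg_add_rev, add_assoc, neg_add_cancel_left]

theorem star_mem' {A : Type*} [SkewBrace A] (B C : AddSubgroup A)
    (hBtriv : ∀ x ∈ B, ∀ y ∈ B, x + y = circ x y)
    (hfact : ∀ a : A, ∃ c ∈ C, ∃ b ∈ B, a = c + b) (b : A) (hb : b ∈ B) (x : A) :
    bstar b x ∈ starSpan (B : Set A) (C : Set A) := by
  obtain ⟨c1, hc, b1, hb1, rfl⟩ := hfact x
  have h0 : bstar b b1 = 0 := by
    simp [bstar, lam, ← hBtriv b hb b1 hb1]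
  rw [bstar_add', h0]
  simp only [add_zero, add_neg_cancel]
  exact AddSubgroup.subset_closure ⟨b, hb, c1, hc, rfl⟩

theorem star_normal' {A : Type*} [SkewBrace A] (B C : AddSubgroup A)
    (hBtriv : ∀ x ∈ B, ∀ y ∈ B, x + y = circ x y)
    (hfact : ∀ a : A, ∃ c ∈ C, ∃ b ∈ B, a = c + b) :
    (starSpan (B : Set A) (C : Set A)).Normal := by
  constructor
  intro n hn g
  have hn' : n ∈ AddSubgroup.closure {z | ∃ x ∈ (B : Set A), ∃ y ∈ (C : Set A), z = bstar x y} := hn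
  induction hn' using AddSubgroup.closure_induction with
  | mem z hz =>
    obtain ⟨b, hb, c, hc, rfl⟩ := hz
    have h : g + bstar b c + -g = -bstar b g + bstar b (g + c) := by
      rw [bstar_add', neg_add_cancel_left]
    rw [h]
    exact add_mem (neg_mem (star_mem' B C hBtriv hfact b hb _)) (star_mem' B C hBtriv hfact b hb _)
  | zero => simp
  | add x y hx hy ihx ihy =>
    have h : g + (x + y) + -g = (g + x + -g) + (g + y + -g) := by simp [add_assoc]
    rw [h]
    exact add_mem (ihx hx) (ihy hy)
  | neg x hx ih =>
    have h : g + -x + -g = -(g + x + -g) := by simp [add_assoc]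
    rw [h]
    exact neg_mem (ih hx)

/-- if `A = B + C` is a factorization through left ideals which are trivial
as skew braces, then `A^(2) = A*A` equals `B*C + C*B` and `C*B + B*C`. -/
theorem stmt8 {A : Type*} [SkewBrace A] (B C : AddSubgroup A)
    (hB : ∀ a : A, ∀ x ∈ B, lam a x ∈ B)
    (hC : ∀ a : A, ∀ x ∈ C, lam a x ∈ C)
    (hBtriv : ∀ x ∈ B, ∀ y ∈ B, x + y = circ x y)
    (hCtriv : ∀ x ∈ C, ∀ y ∈ C, x + y = circ x y)
    (hfact : ∀ a : A, ∃ b ∈ B, ∃ c ∈ C, a = b + c) :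
    ((starSpan (Set.univ : Set A) (Set.univ : Set A) : AddSubgroup A) : Set A) =
      {t : A | ∃ u ∈ starSpan (B : Set A) (C : Set A),
               ∃ v ∈ starSpan (C : Set A) (B : Set A), t = u + v} ∧
    ((starSpan (Set.univ : Set A) (Set.univ : Set A) : AddSubgroup A) : Set A) =
      {t : A | ∃ v ∈ starSpan (C : Set A) (B : Set A),
               ∃ u ∈ starSpan (B : Set A) (C : Set A), t = v + u} := by
  have hfact2 : ∀ a : A, ∃ c ∈ C, ∃ b ∈ B, a = c + b := by
    intro a
    obtain ⟨b, hb, c, hc, h⟩ := hfact (-a)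
    exact ⟨-c, neg_mem hc, -b, neg_mem hb, by rw [← neg_add_rev, ← h, neg_neg]⟩
  have hU := star_normal' B C hBtriv hfact2
  have hV := star_normal' C B hCtriv hfact
  have mU := star_mem' B C hBtriv hfact2
  have mV := star_mem' C B hCtriv hfact
  have key : starSpan (Set.univ : Set A) (Set.univ : Set A) =
      starSpan (B : Set A) (C : Set A) ⊔ starSpan (C : Set A) (B : Set A) := by
    apply le_antisymm
    · refine (AddSubgroup.closure_le _).2 ?_
      rintro z ⟨a, -, x, -, rfl⟩
      obtain ⟨b, hb, c, hc, rfl⟩ := hfact a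
      have e : b + c = circ b (lam (cinv b) c) := by
        rw [circ_eq', ← lam_circ', circ_cinv]
        simp [lam, zero_circ]
      have hc' := hC (cinv b) c hc
      rw [e]
      generalize lam (cinv b) c = d at hc'
      have e2 : bstar (circ b d) x = bstar b (bstar d x) + bstar d x + bstar b x := by
        have : lam d x = bstar d x + x := by simp [bstar]
        rw [bstar, lam_circ', this, lam_add']
        simp [bstar, sub_eq_add_neg, add_assoc]
      rw [e2]
      exact add_mem (add_mem (AddSubgroup.mem_sup_left (mU b hb _))
        (AddSubgroup.mem_sup_right (mV d hc' _))) (AddSubgroup.mem_sup_left (mU b hb _))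
    · refine sup_le (AddSubgroup.closure_mono ?_) (AddSubgroup.closure_mono ?_)
      · rintro z ⟨x, -, y, -, rfl⟩
        exact ⟨x, trivial, y, trivial, rfl⟩
      · rintro z ⟨x, -, y, -, rfl⟩
        exact ⟨x, trivial, y, trivial, rfl⟩
  constructor
  · rw [key]
    ext t
    rw [SetLike.mem_coe, AddSubgroup.mem_sup_of_normal_left]
    simp only [Set.mem_setOf_eq, eq_comm]
  · rw [key, sup_comm]
    ext t
    rw [SetLike.mem_coe, AddSubgroup.mem_sup_of_normal_left]
    simp only [Set.mem_setOf_eq, eq_comm]
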